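/- arXiv:2211.16842 — 2 statements merged into one kernel-verified Lean document; each statement's English description precedes it below -/
import Mathlib

section
/- Let n ≥ 2 and define Q_{n−1}(x₁,…,x_{n−1}) = ∏_{1 ≤ i ≤ j ≤ n−1} (1 − ∏_{k=i}^{j} x_k). Then for all (x₁,…,x_{n−1}) ∈ [−1,1]^{n−1} one has Q_{n−1}(x) ≤ 2^(⌊n/2⌋), and equality holds at the point x* given by x*_i = −1 for i odd and x*_i = 0 for i even. Consequently 2^(⌊n/2⌋) is the maximum of Q_{n−1} on [−1,1]^{n−1}. -/
open Finset

/-- `Q m x = ∏_{1 ≤ i ≤ j ≤ m} (1 − xᵢ x_{i+1} ⋯ xⱼ)` (indices written here zero-based). -/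
noncomputable def Q (m : ℕ) (x : Fin m → ℝ) : ℝ :=
  ∏ p ∈ Finset.univ.filter (fun p : Fin m × Fin m => p.1 ≤ p.2),
    (1 - ∏ k ∈ Finset.Icc p.1 p.2, x k)

/-!
For non-zero `x` put `z_i = x_0 ⋯ x_{i-1}`. The factors of `Q m x` become `1 - z_j / z_i` with
`i < j`, so the bound is Pohst's inequality `∏_{i < j} (1 - z_j / z_i) ≤ 2 ^ ⌊n / 2⌋` for
`|z_0| ≥ ⋯ ≥ |z_{n-1}| > 0`, and zero coordinates follow by continuity. At the alternating point
all products of two or more consecutive coordinates vanish, so `Q m x` is `∏ i, (1 - x i)`.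

Pohst's inequality is proved by induction on `n`. Consider the entry `a` at which the partial sums
of the signs of the `z_i` first reach their maximal absolute value. If `a` is last, deleting it does
not decrease the product. Otherwise the entry `b` following `a` has the opposite sign, and deleting
both decreases the product at most by a factor `2`. Indeed, with `x = -b / a`, an entry `k` before
`a` or after `b` contributes `(1 - u) * (1 + x * u)`, where `u = a / k` or `u = k / b`, and this is
at most `w ^ (-sign u)` for a weight `w ∈ [1, 2 / (1 + x)]` increasing with `|u|`. By the choice of
`a` the sums of these signs are controlled, so Abel summation bounds the contribution of the earlier
entries by `1` and that of the later ones by `2 / (1 + x)`, while `1 - b / a = 1 + x`.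
-/

section PairProd

variable {α M : Type*} [CommMonoid M]

/-- The product of `f a b` over all pairs of entries of a list with `a` occurring before `b`. -/
def pairProd (f : α → α → M) : List α → M
  | [] => 1
  | a :: l => (l.map (f a)).prod * pairProd f l

lemma pairProd_append (f : α → α → M) (l₁ l₂ : List α) :
    pairProd f (l₁ ++ l₂) =
      pairProd f l₁ * pairProd f l₂ * (l₁.map fun a => (l₂.map (f a)).prod).prod := by
  induction l₁ with
  | nil => simp [pairProd]
  | cons a l ih =>
    simp only [List.cons_append, pairProd, ih, List.map_append, List.prod_append, List.map_cons,
      List.prod_cons]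
    ac_rfl

lemma pairProd_concat (f : α → α → M) (l : List α) (a : α) :
    pairProd f (l ++ [a]) = pairProd f l * (l.map fun k => f k a).prod := by
  simp [pairProd_append, pairProd]

lemma pairProd_append_cons_cons (f : α → α → M) (l₁ l₂ : List α) (a b : α) :
    pairProd f (l₁ ++ a :: b :: l₂) =
      pairProd f (l₁ ++ l₂) * (l₁.map fun k => f k a * f k b).prod *
        (f a b * (l₂.map fun k => f a k * f b k).prod) := by
  simp only [pairProd_append, pairProd, List.map_cons, List.prod_cons, List.prod_map_mul]
  ac_rfl

lemma pairProd_ofFn (f : α → α → M) {n : ℕ} (z : Fin n → α) :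
    pairProd f (List.ofFn z) = ∏ i, ∏ j ∈ Ioi i, f (z i) (z j) := by
  induction n with
  | zero => simp [pairProd]
  | succ n ih =>
    rw [List.ofFn_succ, pairProd, ih, Fin.prod_univ_succ, Fin.prod_Ioi_zero, List.map_ofFn,
      List.prod_ofFn]
    simp only [Function.comp_apply, Fin.prod_Ioi_succ]

end PairProd

lemma exists_first_prefix_max {α β : Type*} [LinearOrder β] (S : List α → β) {l : List α}
    (hl : ∃ p, p <+: l ∧ S [] < S p) :
    ∃ L a R, l = L ++ a :: R ∧ (∀ p, p <+: l → S p ≤ S (L ++ [a])) ∧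
      ∀ p, p <+: L → S p < S (L ++ [a]) := by
  classical
  obtain ⟨q, hq, hmax⟩ := l.inits.toFinset.exists_max_image
    (fun p => toLex (S p, OrderDual.toDual p.length)) ⟨[], by simp⟩
  simp only [List.mem_toFinset, List.mem_inits, Prod.Lex.toLex_le_toLex,
    OrderDual.toDual_le_toDual] at hq hmax
  have hle (p : List α) (hp : p <+: l) : S p ≤ S q := (hmax p hp).elim le_of_lt (·.1.le)
  obtain rfl | ⟨L, a, rfl⟩ := q.eq_nil_or_concat
  · obtain ⟨p, hp, hSp⟩ := hl
    exact absurd (hle p hp) hSp.not_ge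
  rw [List.concat_eq_append] at hq hmax hle
  obtain ⟨R, rfl⟩ := hq
  refine ⟨L, a, R, by simp, hle, fun p hp => ?_⟩
  refine (hmax p (hp.trans (by simp))).resolve_right fun h => ?_
  exact absurd h.2 (by simpa using hp.length_le)

-- `a` is the step at which the partial sums of `t` first reach their maximal absolute value.
lemma exists_split_at_max_abs_sum {α : Type*} {t : α → ℤ} {l : List α} (hl : l ≠ [])
    (ht : ∀ a ∈ l, t a = 1 ∨ t a = -1) :
    ∃ L a R, l = L ++ a :: R ∧ (∀ p, p <+: L.reverse → 0 ≤ t a * (p.map t).sum) ∧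
      ∀ p, p <+: R → t a * (p.map t).sum ≤ 0 := by
  obtain ⟨L, a, R, rfl, hle, hlt⟩ :=
      exists_first_prefix_max (fun p => |(p.map t).sum|) (l := l) <| by
    obtain ⟨b, l, rfl⟩ := List.exists_cons_of_ne_nil hl
    refine ⟨[b], by simp, ?_⟩
    rcases ht b (by simp) with h | h <;> simp [h]
  simp only [List.map_append, List.map_cons, List.map_nil, List.sum_append, List.sum_singleton]
    at hle hlt
  have hta : t a = 1 ∨ t a = -1 := ht a (by simp)
  have hmul (s : ℤ) : t a * s ≤ |s| := by
    rcases hta with h | h <;> simp [h, le_abs_self, neg_le_abs]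
  have ha : t a * ((L.map t).sum + t a) = |(L.map t).sum + t a| := by
    have hL := hlt L L.prefix_rfl
    generalize (L.map t).sum = s at hL
    rcases hta with h | h <;> rw [h] at hL ⊢ <;> grind
  refine ⟨L, a, R, rfl, fun p hp => ?_, fun p hp => ?_⟩
  · obtain ⟨q, rfl⟩ := List.reverse_prefix.1 (p.reverse_reverse.symm ▸ hp)
    have hq := hlt q (by simp)
    have hmul_q := hmul (q.map t).sum
    have hta_sq : t a * t a = 1 := by rcases hta with h | h <;> simp [h]
    rw [← ha, List.map_append, List.sum_append, List.map_reverse, List.sum_reverse] at hq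
    linarith
  · have hle_p := hle (L ++ a :: p) (by simpa using hp)
    have hmul_p := hmul ((L.map t).sum + t a + (p.map t).sum)
    rw [List.map_append, List.sum_append, List.map_cons, List.sum_cons, ← add_assoc,
      ← ha] at hle_p
    linarith

lemma sign_eq_one_or_neg_one {α : Type*} [Zero α] [LinearOrder α] {a : α} (ha : a ≠ 0) :
    (SignType.sign a : ℤ) = 1 ∨ (SignType.sign a : ℤ) = -1 := by
  rcases ha.lt_or_gt with h | h <;> simp [h]

lemma pairProd_nonneg {α R : Type*} [CommSemiring R] [PartialOrder R] [IsOrderedRing R]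
    {f : α → α → R} {l : List α} (h : l.Pairwise fun a b => 0 ≤ f a b) : 0 ≤ pairProd f l := by
  induction l with
  | nil => exact zero_le_one
  | cons a l ih =>
    rw [List.pairwise_cons] at h
    exact mul_nonneg (List.prod_nonneg (List.forall_mem_map.2 h.1)) (ih h.2)

-- Abel summation in multiplicative form.
lemma prod_map_le_zpow {α 𝕜 : Type*} [Semifield 𝕜] [LinearOrder 𝕜] [IsStrictOrderedRing 𝕜]
    {f w : α → 𝕜} {t : α → ℤ} {C : 𝕜} {h : ℤ} {l : List α}
    (hf : ∀ a ∈ l, 0 ≤ f a) (hfw : ∀ a ∈ l, f a ≤ w a ^ (-t a)) (hw : ∀ a ∈ l, 1 ≤ w a)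
    (hanti : l.Pairwise fun a b => w b ≤ w a) (hC : 1 ≤ C) (hwC : ∀ a ∈ l, w a ≤ C)
    (ht : ∀ p, p <+: l → 0 ≤ h + (p.map t).sum) :
    (l.map f).prod ≤ C ^ h := by
  have hh : 0 ≤ h := by simpa using ht [] List.nil_prefix
  induction l generalizing C h with
  | nil => simpa using one_le_zpow₀ hC hh
  | cons a l ih =>
    simp only [List.forall_mem_cons] at hf hfw hw hwC
    rw [List.pairwise_cons] at hanti
    have htail : (l.map f).prod ≤ w a ^ (h + t a) :=
      ih hf.2 hfw.2 hw.2 hanti.2 hw.1 hanti.1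
        (fun p hp => by simpa [add_assoc] using ht (a :: p) (by simpa using hp))
        (by simpa using ht [a] (by simp))
    have hwa : 0 < w a := zero_lt_one.trans_le hw.1
    calc ((a :: l).map f).prod = f a * (l.map f).prod := by simp
      _ ≤ w a ^ (-t a) * w a ^ (h + t a) := by
        gcongr
        · exact List.prod_nonneg (List.forall_mem_map.2 hf.2)
        · exact hfw.1
      _ = w a ^ h := by rw [← zpow_add₀ hwa.ne', neg_add_cancel_comm_assoc]
      _ ≤ C ^ h := zpow_le_zpow_left₀ hh hwa.le hwC.1

section Field

variable {𝕜 : Type*} [Field 𝕜]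

/-- The product `∏_{i < j} (1 - z_j / z_i)` over a list `[z₀, z₁, …]`, which Pohst's inequality
bounds when the `|z_i|` are non-increasing. -/
def pohstProd (l : List 𝕜) : 𝕜 := pairProd (fun a b => 1 - b / a) l

/-- The product of the two factors linking an entry of a list to two adjacent entries `a` and
`b = -x * a`: it is `(1 - a / k) * (1 - b / k)` at `u = a / k` for an earlier entry `k`, and
`(1 - k / a) * (1 - k / b)` at `u = k / b` for a later one. -/
def twinFactor (x u : 𝕜) : 𝕜 := (1 - u) * (1 + x * u)

/-- The weight `w` used to estimate `twinFactor x` for `0 ≤ x ≤ 1`: it increases with `v ≥ 0`, and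
`twinFactor x v ≤ w⁻¹`, `twinFactor x (-v) ≤ w`. -/
def twinBound (x v : 𝕜) : 𝕜 := (1 + v) / (1 + x * v)

lemma pohstProd_append_cons_cons {a b : 𝕜} (ha : a ≠ 0) (hb : b ≠ 0) (L R : List 𝕜) :
    pohstProd (L ++ a :: b :: R) =
      pohstProd (L ++ R) *
        ((L.map fun k => twinFactor (-(b / a)) (a / k)).prod *
          ((1 - b / a) * (R.map fun k => twinFactor (-(b / a)) (k / b)).prod)) := by
  have hL : (fun k => (1 - a / k) * (1 - b / k)) = fun k => twinFactor (-(b / a)) (a / k) := by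
    ext k
    rw [twinFactor, neg_mul, div_mul_div_cancel₀ ha, ← sub_eq_add_neg]
  have hR : (fun k => (1 - k / a) * (1 - k / b)) = fun k => twinFactor (-(b / a)) (k / b) := by
    ext k
    rw [twinFactor, neg_mul, mul_comm (b / a), div_mul_div_cancel₀ hb, ← sub_eq_add_neg, mul_comm]
  rw [pohstProd, pairProd_append_cons_cons, hL, hR, mul_assoc, pohstProd]

variable [LinearOrder 𝕜] [IsStrictOrderedRing 𝕜]

lemma sign_div (a b : 𝕜) :
    SignType.sign (a / b) = SignType.sign a * SignType.sign b := by
  have sign_div_sign (s t : SignType) : s / t = s * t := by decide +revert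
  rw [← sign_div_sign]
  exact map_div₀ (signHom (α := 𝕜)) a b

lemma div_nonpos_of_sign_eq_neg {a b : 𝕜} (h : SignType.sign a = -SignType.sign b) :
    b / a ≤ 0 := by
  have mul_neg_self_nonpos (s : SignType) : s * -s ≤ 0 := by decide +revert
  rw [← sign_nonpos_iff, sign_div, h]
  exact mul_neg_self_nonpos _

lemma abs_div_le_one {a b : 𝕜} (h : |a| ≤ |b|) : |a / b| ≤ 1 := by
  rw [abs_div]
  exact div_le_one_of_le₀ h (abs_nonneg b)

lemma twinFactor_le_twinBound_zpow {x : 𝕜} (hx : 0 ≤ x) (u : 𝕜) :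
    twinFactor x u ≤ twinBound x |u| ^ (-SignType.sign u : ℤ) := by
  rcases lt_trichotomy u 0 with h | rfl | h
  · have hu : 0 < -u := neg_pos.2 h
    have hxu : 0 < 1 + x * -u := by positivity
    simp only [abs_of_neg h, sign_neg h, SignType.coe_neg_one, neg_neg, zpow_one, twinFactor,
      twinBound]
    rw [le_div_iff₀ hxu]
    calc (1 - u) * (1 + x * u) * (1 + x * -u) = (1 + -u) * (1 - (x * u) ^ 2) := by ring
      _ ≤ 1 + -u := mul_le_of_le_one_right (by positivity) (sub_le_self _ (sq_nonneg _))
  · simp [twinFactor]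
  · simp only [abs_of_pos h, sign_pos h, SignType.coe_one, zpow_neg_one, twinFactor, twinBound,
      inv_div]
    rw [le_div_iff₀ (by positivity)]
    calc (1 - u) * (1 + x * u) * (1 + u) = (1 + x * u) * (1 - u ^ 2) := by ring
      _ ≤ 1 + x * u := mul_le_of_le_one_right (by positivity) (sub_le_self _ (sq_nonneg _))

section Twin

variable {x : 𝕜} (hx0 : 0 ≤ x) (hx1 : x ≤ 1)

include hx0 hx1

lemma twinFactor_nonneg {u : 𝕜} (hu : |u| ≤ 1) : 0 ≤ twinFactor x u := by
  obtain ⟨hu₁, hu₂⟩ := abs_le.1 hu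
  exact mul_nonneg (by linarith) (by nlinarith)

lemma twinBound_monotoneOn : MonotoneOn (twinBound x) (Set.Ici 0) := by
  intro v hv w hw hvw
  rw [Set.mem_Ici] at hv hw
  unfold twinBound
  rw [div_le_div_iff₀ (by positivity) (by positivity)]
  nlinarith

lemma one_le_twinBound {v : 𝕜} (hv : 0 ≤ v) : 1 ≤ twinBound x v := by
  simpa [twinBound] using twinBound_monotoneOn hx0 hx1 Set.self_mem_Ici hv hv

lemma prod_twinFactor_le {α : Type*} {u : α → 𝕜} {h : ℤ} {l : List α}
    (hu : ∀ k ∈ l, |u k| ≤ 1) (hanti : l.Pairwise fun j k => |u k| ≤ |u j|)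
    (hsum : ∀ p, p <+: l → 0 ≤ h + (p.map fun k => (SignType.sign (u k) : ℤ)).sum) :
    (l.map fun k => twinFactor x (u k)).prod ≤ (2 / (1 + x)) ^ h := by
  have twinBound_one : twinBound x 1 = 2 / (1 + x) := by norm_num [twinBound]
  have hmono := twinBound_monotoneOn hx0 hx1
  rw [← twinBound_one]
  exact prod_map_le_zpow (w := fun k => twinBound x |u k|)
    (fun k hk => twinFactor_nonneg hx0 hx1 (hu k hk))
    (fun k _ => twinFactor_le_twinBound_zpow hx0 (u k))
    (fun k _ => one_le_twinBound hx0 hx1 (abs_nonneg _))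
    (hanti.imp fun h => hmono (abs_nonneg _) (abs_nonneg _) h)
    (one_le_twinBound hx0 hx1 zero_le_one)
    (fun k hk => hmono (abs_nonneg _) zero_le_one (hu k hk)) hsum

lemma prod_twinFactor_div_le_one {a : 𝕜} {L : List 𝕜} (hL0 : ∀ k ∈ L, k ≠ 0)
    (hL : (L ++ [a]).Pairwise fun j k => |k| ≤ |j|)
    (hsum : ∀ p, p <+: L.reverse →
      0 ≤ (SignType.sign a : ℤ) * (p.map fun k => (SignType.sign k : ℤ)).sum) :
    (L.map fun k => twinFactor x (a / k)).prod ≤ 1 := by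
  obtain ⟨hLL, -, hLa⟩ := List.pairwise_append.1 hL
  rw [← List.prod_reverse, ← List.map_reverse]
  refine (prod_twinFactor_le hx0 hx1 (h := 0) (fun k hk => ?_) ?_ fun p hp => ?_).trans_eq
    (zpow_zero _)
  · exact abs_div_le_one (hLa k (by simpa using hk) a (by simp))
  · rw [List.pairwise_reverse]
    refine hLL.imp_of_mem fun {j k} _ hk hjk => ?_
    rw [abs_div, abs_div]
    have := abs_pos.2 (hL0 k hk)
    gcongr
  · simpa [sign_div, List.sum_map_mul_left] using hsum p hp

lemma prod_div_twinFactor_le {b : 𝕜} {R : List 𝕜} (hR : (b :: R).Pairwise fun j k => |k| ≤ |j|)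
    (hsum : ∀ p, p <+: R →
      0 ≤ 1 + (SignType.sign b : ℤ) * (p.map fun k => (SignType.sign k : ℤ)).sum) :
    (R.map fun k => twinFactor x (k / b)).prod ≤ 2 / (1 + x) := by
  obtain ⟨hbR, hRR⟩ := List.pairwise_cons.1 hR
  refine (prod_twinFactor_le hx0 hx1 (h := 1) (fun k hk => ?_) ?_ fun p hp => ?_).trans_eq
    (zpow_one _)
  · exact abs_div_le_one (hbR k hk)
  · refine hRR.imp fun {j k} hjk => ?_
    rw [abs_div, abs_div]
    gcongr
  · simpa only [sign_div, SignType.coe_mul, mul_comm _ (SignType.sign b : ℤ),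
      List.sum_map_mul_left] using hsum p hp

end Twin

lemma pohstProd_nonneg {l : List 𝕜} (hl : l.Pairwise fun a b => |b| ≤ |a|) : 0 ≤ pohstProd l :=
  pairProd_nonneg (hl.imp fun h => sub_nonneg.2 ((le_abs_self _).trans (abs_div_le_one h)))

lemma pohstProd_concat_le {L : List 𝕜} {a : 𝕜} (hL0 : ∀ k ∈ L, k ≠ 0)
    (hL : (L ++ [a]).Pairwise fun j k => |k| ≤ |j|)
    (hsum : ∀ p, p <+: L.reverse →
      0 ≤ (SignType.sign a : ℤ) * (p.map fun k => (SignType.sign k : ℤ)).sum) :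
    pohstProd (L ++ [a]) ≤ pohstProd L := by
  rw [pohstProd, pairProd_concat]
  refine mul_le_of_le_one_right (pohstProd_nonneg (List.pairwise_append.1 hL).1) ?_
  simpa [twinFactor] using prod_twinFactor_div_le_one le_rfl zero_le_one hL0 hL hsum

lemma pohstProd_append_cons_cons_le {L R : List 𝕜} {a b : 𝕜}
    (h0 : ∀ k ∈ L ++ a :: b :: R, k ≠ 0)
    (hl : (L ++ a :: b :: R).Pairwise fun j k => |k| ≤ |j|)
    (hL : ∀ p, p <+: L.reverse →
      0 ≤ (SignType.sign a : ℤ) * (p.map fun k => (SignType.sign k : ℤ)).sum)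
    (hR : ∀ p, p <+: b :: R →
      (SignType.sign a : ℤ) * (p.map fun k => (SignType.sign k : ℤ)).sum ≤ 0) :
    pohstProd (L ++ a :: b :: R) ≤ pohstProd (L ++ R) * 2 := by
  have ha : a ≠ 0 := h0 a (by simp)
  have hb : b ≠ 0 := h0 b (by simp)
  have hbR : (b :: R).Pairwise fun j k => |k| ≤ |j| := (List.pairwise_append.1 hl).2.1.of_cons
  have hab : |b| ≤ |a| := (List.pairwise_cons.1 (List.pairwise_append.1 hl).2.1).1 b (by simp)
  have hsign : SignType.sign a = -SignType.sign b := by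
    have := hR [b] (by simp)
    rcases ha.lt_or_gt with h | h <;> rcases hb.lt_or_gt with h' | h' <;> simp [h, h'] at this ⊢
  obtain ⟨x, hx⟩ : ∃ x, x = -(b / a) := ⟨_, rfl⟩
  have hx0 : 0 ≤ x := hx ▸ neg_nonneg.2 (div_nonpos_of_sign_eq_neg hsign)
  have hx1 : x ≤ 1 := hx ▸ (neg_le_abs _).trans (abs_div_le_one hab)
  have hleft : (L.map fun k => twinFactor x (a / k)).prod ≤ 1 :=
    prod_twinFactor_div_le_one hx0 hx1 (fun k hk => h0 k (by simp [hk])) (hl.sublist (by simp)) hL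
  have hright : (R.map fun k => twinFactor x (k / b)).prod ≤ 2 / (1 + x) := by
    refine prod_div_twinFactor_le hx0 hx1 hbR fun p hp => ?_
    have hbb : (SignType.sign b : ℤ) * SignType.sign b = 1 := by
      rcases sign_eq_one_or_neg_one hb with h | h <;> simp [h]
    have := hR (b :: p) (by simpa using hp)
    rw [hsign, SignType.coe_neg, List.map_cons, List.sum_cons] at this
    linarith
  have hright_nonneg : 0 ≤ (R.map fun k => twinFactor x (k / b)).prod :=
    List.prod_nonneg <| List.forall_mem_map.2 fun k hk =>
      twinFactor_nonneg hx0 hx1 (abs_div_le_one ((List.pairwise_cons.1 hbR).1 k hk))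
  have hx_pos : 0 < 1 + x := by linarith
  rw [pohstProd_append_cons_cons ha hb, ← hx, sub_eq_add_neg, ← hx]
  gcongr
  · exact pohstProd_nonneg (hl.sublist (by simp))
  · exact (mul_le_of_le_one_left (by positivity) hleft).trans ((le_div_iff₀' hx_pos).1 hright)

theorem pohstProd_le {l : List 𝕜} (h0 : ∀ a ∈ l, a ≠ 0) (hl : l.Pairwise fun a b => |b| ≤ |a|) :
    pohstProd l ≤ 2 ^ (l.length / 2) := by
  induction hn : l.length using Nat.strong_induction_on generalizing l with | h n ih
  subst hn
  rcases eq_or_ne l [] with rfl | hne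
  · simp [pohstProd, pairProd]
  obtain ⟨L, a, R, rfl, hL, hR⟩ :=
    exists_split_at_max_abs_sum hne fun a ha => sign_eq_one_or_neg_one (h0 a ha)
  rcases R with _ | ⟨b, R⟩
  · calc pohstProd (L ++ [a]) ≤ pohstProd L :=
          pohstProd_concat_le (fun k hk => h0 k (by simp [hk])) hl hL
      _ ≤ 2 ^ (L.length / 2) :=
          ih _ (by simp) (fun k hk => h0 k (by simp [hk])) (List.pairwise_append.1 hl).1 rfl
      _ ≤ 2 ^ ((L ++ [a]).length / 2) := by
          gcongr
          · exact one_le_two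
          · simp
  · have hsub : (L ++ R).Sublist (L ++ a :: b :: R) := by simp
    have hlength : (L ++ a :: b :: R).length = (L ++ R).length + 2 := by simp [add_assoc]
    calc pohstProd (L ++ a :: b :: R)
        ≤ pohstProd (L ++ R) * 2 := pohstProd_append_cons_cons_le h0 hl hL hR
      _ ≤ 2 ^ ((L ++ R).length / 2) * 2 := by
          gcongr
          exact ih _ (by lia) (fun k hk => h0 k (hsub.subset hk)) (hl.sublist hsub) rfl
      _ = 2 ^ ((L ++ a :: b :: R).length / 2) := by
          rw [hlength, Nat.add_div_right _ two_pos, pow_succ]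

/-- **Pohst's inequality**. -/
theorem prod_one_sub_div_le {n : ℕ} {z : Fin n → 𝕜} (h0 : ∀ i, z i ≠ 0)
    (hz : Antitone fun i => |z i|) : ∏ i, ∏ j ∈ Ioi i, (1 - z j / z i) ≤ 2 ^ (n / 2) := by
  simpa only [pohstProd, pairProd_ofFn, List.length_ofFn] using
    pohstProd_le (l := List.ofFn z) (by simpa using h0)
      (List.pairwise_ofFn.2 fun i j hij => hz hij.le)

end Field

section PartialProd

variable {M : Type*} [CommMonoid M]

lemma partialProd_eq_prod_filter {m : ℕ} (x : Fin m → M) (i : Fin (m + 1)) :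
    Fin.partialProd x i = ∏ k with k.castSucc < i, x k := by
  induction i using Fin.induction with
  | zero => simp
  | succ i ih =>
    have hfilter : univ.filter (fun k : Fin m => k.castSucc < i.succ) =
        insert i (univ.filter fun k => k.castSucc < i.castSucc) := by
      ext k; simp [le_iff_eq_or_lt]
    rw [hfilter, prod_insert (by simp), Fin.partialProd_succ, ih, mul_comm]

lemma partialProd_mul_prod_Icc {m : ℕ} (x : Fin m → M) {i j : Fin m} (hij : i ≤ j) :
    Fin.partialProd x i.castSucc * ∏ k ∈ Icc i j, x k = Fin.partialProd x j.succ := by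
  have hdisj : Disjoint (univ.filter fun k : Fin m => k.castSucc < i.castSucc) (Icc i j) := by
    rw [disjoint_left]
    grind
  rw [partialProd_eq_prod_filter, partialProd_eq_prod_filter, ← prod_union hdisj]
  congr 1
  ext k
  simp only [mem_union, mem_filter, mem_univ, true_and, mem_Icc, Fin.castSucc_lt_succ_iff,
    Fin.castSucc_lt_castSucc_iff]
  grind

lemma partialProd_ne_zero {R : Type*} [CommMonoidWithZero R] [NoZeroDivisors R] [Nontrivial R]
    {m : ℕ} {x : Fin m → R} (hx : ∀ k, x k ≠ 0) (i : Fin (m + 1)) : Fin.partialProd x i ≠ 0 := by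
  rw [partialProd_eq_prod_filter]
  exact prod_ne_zero_iff.2 fun k _ => hx k

lemma prod_Ioi_castSucc {m : ℕ} (f : Fin (m + 1) → M) (i : Fin m) :
    ∏ j ∈ Ioi i.castSucc, f j = ∏ j ∈ Ici i, f j.succ := by
  have hmap : Ioi i.castSucc = (Ici i).map (Fin.succEmb m) := by
    ext j
    simp [Fin.castSucc_lt_iff_succ_le]
  rw [hmap, prod_map, Fin.coe_succEmb]

end PartialProd

lemma Q_eq_prod_Ici (m : ℕ) (x : Fin m → ℝ) :
    Q m x = ∏ i, ∏ j ∈ Ici i, (1 - ∏ k ∈ Icc i j, x k) :=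
  prod_finset_product _ _ _ (by simp)

lemma Q_eq_prod_one_sub_div {m : ℕ} {x : Fin m → ℝ} (hx : ∀ k, x k ≠ 0) :
    Q m x = ∏ i, ∏ j ∈ Ioi i, (1 - Fin.partialProd x j / Fin.partialProd x i) := by
  rw [Q_eq_prod_Ici, Fin.prod_univ_castSucc]
  simp only [prod_Ioi_castSucc, ← Fin.top_eq_last, Ioi_top, prod_empty, mul_one]
  refine prod_congr rfl fun i _ => prod_congr rfl fun j hj => ?_
  rw [← partialProd_mul_prod_Icc x (mem_Ici.1 hj),
    mul_div_cancel_left₀ _ (partialProd_ne_zero hx _)]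

lemma Q_le_of_ne_zero {m : ℕ} {x : Fin m → ℝ} (hx : ∀ k, |x k| ≤ 1) (h0 : ∀ k, x k ≠ 0) :
    Q m x ≤ 2 ^ ((m + 1) / 2) := by
  rw [Q_eq_prod_one_sub_div h0]
  refine prod_one_sub_div_le (partialProd_ne_zero h0) (Fin.antitone_iff_succ_le.2 fun i => ?_)
  rw [Fin.partialProd_succ, abs_mul]
  exact mul_le_of_le_one_right (abs_nonneg _) (hx i)

lemma continuous_Q (m : ℕ) : Continuous (Q m) := by
  unfold Q; fun_prop

lemma Icc_subset_closure_Ioo_inter_compl_zero :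
    Set.Icc (-1 : ℝ) 1 ⊆ closure (Set.Ioo (-1) 1 ∩ {0}ᶜ) := by
  rw [← closure_Ioo (by norm_num)]
  exact closure_minimal ((dense_compl_singleton 0).open_subset_closure_inter isOpen_Ioo)
    isClosed_closure

lemma Q_le {m : ℕ} {x : Fin m → ℝ} (hx : ∀ k, x k ∈ Set.Icc (-1) 1) :
    Q m x ≤ 2 ^ ((m + 1) / 2) := by
  have hmem : x ∈ closure (Set.univ.pi fun _ => Set.Ioo (-1 : ℝ) 1 ∩ {0}ᶜ) := by
    rw [closure_pi_set]
    exact fun k _ => Icc_subset_closure_Ioo_inter_compl_zero (hx k)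
  refine le_on_closure (fun y hy => ?_) (continuous_Q m).continuousOn continuousOn_const hmem
  exact Q_le_of_ne_zero (fun k => abs_le.2 ⟨(hy k trivial).1.1.le, (hy k trivial).1.2.le⟩)
    fun k => (hy k trivial).2

lemma Q_eq_prod_of_adjacent_mul_eq_zero {m : ℕ} {x : Fin m → ℝ}
    (hx : ∀ i j : Fin m, (i : ℕ) + 1 = j → x i * x j = 0) : Q m x = ∏ i, (1 - x i) := by
  rw [Q_eq_prod_Ici]
  refine prod_congr rfl fun i _ => ?_
  rw [prod_eq_single_of_mem i (by simp) fun j hj hji => ?_, Icc_self, prod_singleton]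
  have hij : i < j := (mem_Ici.1 hj).lt_of_ne hji.symm
  let i' : Fin m := ⟨i + 1, by lia⟩
  rw [sub_eq_self, prod_eq_zero_iff]
  rcases mul_eq_zero.1 (hx i i' rfl) with h | h
  · exact ⟨i, by simp [hij.le], h⟩
  · exact ⟨i', by simp [i', Fin.le_def]; lia, h⟩

lemma prod_range_one_sub_alternating (m : ℕ) :
    ∏ i ∈ range m, (1 - (if i % 2 = 0 then -1 else 0) : ℝ) = 2 ^ ((m + 1) / 2) := by
  induction m with
  | zero => simp
  | succ m ih =>
    rw [prod_range_succ, ih]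
    split_ifs with hm
    · rw [show (m + 1 + 1) / 2 = (m + 1) / 2 + 1 by lia, pow_succ]
      norm_num
    · rw [show (m + 1 + 1) / 2 = (m + 1) / 2 by lia, sub_zero, mul_one]

lemma Q_alternating (m : ℕ) :
    Q m (fun i => if (i : ℕ) % 2 = 0 then -1 else 0) = 2 ^ ((m + 1) / 2) := by
  rw [Q_eq_prod_of_adjacent_mul_eq_zero fun i j hij => by grind,
    Fin.prod_univ_eq_prod_range (fun i => (1 - (if i % 2 = 0 then -1 else 0) : ℝ)),
    prod_range_one_sub_alternating]

theorem Q_max :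
    ∀ n : ℕ, 2 ≤ n →
      (∀ x : Fin (n - 1) → ℝ, (∀ i, x i ∈ Set.Icc (-1 : ℝ) 1) →
        Q (n - 1) x ≤ 2 ^ (n / 2)) ∧
      Q (n - 1) (fun i => if (i : ℕ) % 2 = 0 then -1 else 0) = 2 ^ (n / 2) := by
  intro n hn
  obtain ⟨m, rfl⟩ : ∃ m, n = m + 1 := ⟨n - 1, by lia⟩
  exact ⟨fun x hx => Q_le hx, Q_alternating m⟩
end

section
/- For all x, y, z, g ∈ [0,1], one has (1 + xy)(1 − 2xyzg + (xyz)²)(1 − y)(1 + 2yzg + (yz)²) ≤ 32/27. -/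
/-!
Put `w = y |z|` and `p = y z g`, so that `0 ≤ w ≤ y` and `p ≤ w`. If `1 + 2 p + w ^ 2 ≤ 0`,
the whole product is nonpositive. Otherwise, as `(1 + x y) (1 - y)` decreases in `y`, one may
replace `y` by `w` there. The cubic `(1 + x w) (1 - 2 x p + (x w) ^ 2)` is at most the larger of its
values at `x = 0` and `x = 1`, and at these endpoints the product is at most `(1 - t) (1 + t) ^ 2`
with `t = w` and `t = w ^ 2` respectively. The maximum of this polynomial over `t ≥ 0` is `32 / 27`,
attained at `t = 1 / 3`.
-/

theorem one_sub_mul_one_add_sq_le {t : ℝ} (ht : -(5 / 3) ≤ t) :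
    (1 - t) * (1 + t) ^ 2 ≤ 32 / 27 := by
  have gap : 32 / 27 - (1 - t) * (1 + t) ^ 2 = (t + 5 / 3) * (t - 1 / 3) ^ 2 := by ring
  have gap_nonneg : 0 ≤ (t + 5 / 3) * (t - 1 / 3) ^ 2 :=
    mul_nonneg (by linarith) (sq_nonneg _)
  exact sub_nonneg.1 (gap ▸ gap_nonneg)

theorem antitoneOn_one_add_mul_mul_one_sub {x : ℝ} (hx : x ∈ Set.Icc (0 : ℝ) 1) :
    AntitoneOn (fun t : ℝ ↦ (1 + x * t) * (1 - t)) (Set.Ici 0) := by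
  intro a (ha : 0 ≤ a) b (hb : 0 ≤ b) hab
  have gap : (1 + x * a) * (1 - a) - (1 + x * b) * (1 - b) =
      (b - a) * ((1 - x) + x * (a + b)) := by ring
  have gap_nonneg : 0 ≤ (b - a) * ((1 - x) + x * (a + b)) :=
    mul_nonneg (sub_nonneg.2 hab)
      (add_nonneg (sub_nonneg.2 hx.2) (mul_nonneg hx.1 (add_nonneg ha hb)))
  exact sub_nonneg.1 (gap ▸ gap_nonneg)

theorem one_add_mul_mul_quadratic_le_max {x w : ℝ} (p : ℝ) (hx : x ∈ Set.Icc (0 : ℝ) 1)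
    (hw : 0 ≤ w) :
    (1 + x * w) * (1 - 2 * x * p + (x * w) ^ 2) ≤ max 1 ((1 + w) * (1 - 2 * p + w ^ 2)) := by
  obtain ⟨hx0, hx1⟩ := hx
  rcases le_total 0 (w - 2 * p) with hslope | hslope
  · -- The cubic has nonnegative coefficients, so it increases in `x`.
    refine le_max_of_le_right ?_
    calc (1 + x * w) * (1 - 2 * x * p + (x * w) ^ 2)
        = 1 + x * ((w - 2 * p) * (1 + x * w) + x ^ 2 * w ^ 3) := by ring
      _ ≤ 1 + 1 * ((w - 2 * p) * (1 + 1 * w) + 1 ^ 2 * w ^ 3) := by gcongr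
      _ = (1 + w) * (1 - 2 * p + w ^ 2) := by ring
  · -- The cubic lies below the parabola `1 + c x ^ 2` with the same values at `0` and `1`.
    have gap_nonneg : 0 ≤ x * (1 - x) * (x * w ^ 3 - (w - 2 * p)) :=
      mul_nonneg (mul_nonneg hx0 (sub_nonneg.2 hx1))
        (sub_nonneg.2 (hslope.trans (by positivity)))
    calc (1 + x * w) * (1 - 2 * x * p + (x * w) ^ 2)
        = (1 - x ^ 2) * 1 + x ^ 2 * ((1 + w) * (1 - 2 * p + w ^ 2)) -
            x * (1 - x) * (x * w ^ 3 - (w - 2 * p)) := by ring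
      _ ≤ (1 - x ^ 2) * 1 + x ^ 2 * ((1 + w) * (1 - 2 * p + w ^ 2)) := sub_le_self _ gap_nonneg
      _ ≤ max 1 ((1 + w) * (1 - 2 * p + w ^ 2)) :=
        Convex.combo_le_max _ _ (sub_nonneg.2 (pow_le_one₀ hx0 hx1)) (sq_nonneg x)
          (sub_add_cancel _ _)

theorem one_sub_mul_quadratic_le {w p : ℝ} (hw : w ∈ Set.Icc (-(5 / 3) : ℝ) 1) (hp : p ≤ w) :
    (1 - w) * (1 + 2 * p + w ^ 2) ≤ 32 / 27 :=
  calc (1 - w) * (1 + 2 * p + w ^ 2)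
      ≤ (1 - w) * (1 + w) ^ 2 :=
        mul_le_mul_of_nonneg_left (by linarith) (sub_nonneg.2 hw.2)
    _ ≤ 32 / 27 := one_sub_mul_one_add_sq_le hw.1

theorem one_sub_sq_mul_quadratic_mul_quadratic_le {w : ℝ} (p : ℝ) (hw : w ^ 2 ≤ 1) :
    (1 - w ^ 2) * ((1 - 2 * p + w ^ 2) * (1 + 2 * p + w ^ 2)) ≤ 32 / 27 :=
  calc (1 - w ^ 2) * ((1 - 2 * p + w ^ 2) * (1 + 2 * p + w ^ 2))
      = (1 - w ^ 2) * ((1 + w ^ 2) ^ 2 - (2 * p) ^ 2) := by ring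
    _ ≤ (1 - w ^ 2) * (1 + w ^ 2) ^ 2 :=
        mul_le_mul_of_nonneg_left (sub_le_self _ (sq_nonneg _)) (sub_nonneg.2 hw)
    _ ≤ 32 / 27 := one_sub_mul_one_add_sq_le (by linarith [sq_nonneg w])

theorem one_add_mul_mul_one_sub_mul_quadratics_le {x w p : ℝ} (hx : x ∈ Set.Icc (0 : ℝ) 1)
    (hw : w ∈ Set.Icc (0 : ℝ) 1) (hp : p ≤ w) (hplus : 0 ≤ 1 + 2 * p + w ^ 2) :
    (1 + x * w) * (1 - w) * ((1 - 2 * x * p + (x * w) ^ 2) * (1 + 2 * p + w ^ 2)) ≤ 32 / 27 := by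
  have hrest : 0 ≤ (1 - w) * (1 + 2 * p + w ^ 2) := mul_nonneg (sub_nonneg.2 hw.2) hplus
  have at_zero : 1 * ((1 - w) * (1 + 2 * p + w ^ 2)) ≤ 32 / 27 := by
    rw [one_mul]
    exact one_sub_mul_quadratic_le ⟨by linarith [hw.1], hw.2⟩ hp
  have at_one : (1 + w) * (1 - 2 * p + w ^ 2) * ((1 - w) * (1 + 2 * p + w ^ 2)) ≤ 32 / 27 := by
    convert one_sub_sq_mul_quadratic_mul_quadratic_le p (pow_le_one₀ hw.1 hw.2) using 1
    ring
  calc (1 + x * w) * (1 - w) * ((1 - 2 * x * p + (x * w) ^ 2) * (1 + 2 * p + w ^ 2))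
      = (1 + x * w) * (1 - 2 * x * p + (x * w) ^ 2) * ((1 - w) * (1 + 2 * p + w ^ 2)) := by ring
    _ ≤ max 1 ((1 + w) * (1 - 2 * p + w ^ 2)) * ((1 - w) * (1 + 2 * p + w ^ 2)) :=
        mul_le_mul_of_nonneg_right (one_add_mul_mul_quadratic_le_max p hx hw.1) hrest
    _ ≤ 32 / 27 := by
        rw [max_mul_of_nonneg _ _ hrest]
        exact max_le at_zero at_one

theorem one_sub_two_mul_add_sq_nonneg {x w p : ℝ} (hx : 0 ≤ x) (hp : p ≤ w) :
    0 ≤ 1 - 2 * x * p + (x * w) ^ 2 := by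
  have hxp : x * p ≤ x * w := mul_le_mul_of_nonneg_left hp hx
  linarith [sq_nonneg (1 - x * w)]

theorem one_add_mul_mul_one_sub_mul_quadratics_le_of_le {x y w p : ℝ}
    (hx : x ∈ Set.Icc (0 : ℝ) 1) (hy : y ≤ 1) (hw : 0 ≤ w) (hwy : w ≤ y) (hp : p ≤ w) :
    (1 + x * y) * (1 - y) * ((1 - 2 * x * p + (x * w) ^ 2) * (1 + 2 * p + w ^ 2)) ≤ 32 / 27 := by
  have hy0 : 0 ≤ y := hw.trans hwy
  have hminus : 0 ≤ 1 - 2 * x * p + (x * w) ^ 2 := one_sub_two_mul_add_sq_nonneg hx.1 hp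
  rcases le_total 0 (1 + 2 * p + w ^ 2) with hplus | hplus
  · calc (1 + x * y) * (1 - y) * ((1 - 2 * x * p + (x * w) ^ 2) * (1 + 2 * p + w ^ 2))
        ≤ (1 + x * w) * (1 - w) * ((1 - 2 * x * p + (x * w) ^ 2) * (1 + 2 * p + w ^ 2)) :=
          mul_le_mul_of_nonneg_right (antitoneOn_one_add_mul_mul_one_sub hx hw hy0 hwy)
            (mul_nonneg hminus hplus)
      _ ≤ 32 / 27 := one_add_mul_mul_one_sub_mul_quadratics_le hx ⟨hw, hwy.trans hy⟩ hp hplus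
  · have hfactor : 0 ≤ (1 + x * y) * (1 - y) :=
      mul_nonneg (add_nonneg zero_le_one (mul_nonneg hx.1 hy0)) (sub_nonneg.2 hy)
    have hnonpos := mul_nonpos_of_nonneg_of_nonpos hfactor
      (mul_nonpos_of_nonneg_of_nonpos hminus hplus)
    exact hnonpos.trans (by norm_num)

theorem static_estimate_square_32_27_general {x y z g : ℝ} (hx : x ∈ Set.Icc (0 : ℝ) 1)
    (hy : y ∈ Set.Icc (0 : ℝ) 1) (hz : |z| ≤ 1) (hzg : z * g ≤ |z|) :
    (1 + x * y) * (1 - 2 * x * y * z * g + (x * y * z) ^ 2) *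
      (1 - y) * (1 + 2 * y * z * g + (y * z) ^ 2) ≤ 32 / 27 := by
  have hw : 0 ≤ y * |z| := mul_nonneg hy.1 (abs_nonneg z)
  have hwy : y * |z| ≤ y := mul_le_of_le_one_right hy.1 hz
  have hp : y * (z * g) ≤ y * |z| := mul_le_mul_of_nonneg_left hzg hy.1
  convert one_add_mul_mul_one_sub_mul_quadratics_le_of_le hx hy.2 hw hwy hp using 1
  simp only [mul_pow, sq_abs]
  ring

theorem static_estimate_square_32_27 :
    ∀ x y z g : ℝ, x ∈ Set.Icc (0 : ℝ) 1 → y ∈ Set.Icc (0 : ℝ) 1 →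
      z ∈ Set.Icc (0 : ℝ) 1 → g ∈ Set.Icc (0 : ℝ) 1 →
      (1 + x * y) * (1 - 2 * x * y * z * g + (x * y * z) ^ 2) *
        (1 - y) * (1 + 2 * y * z * g + (y * z) ^ 2) ≤ 32 / 27 := by
  intro x y z g hx hy hz hg
  have habs : |z| = z := abs_of_nonneg hz.1
  exact static_estimate_square_32_27_general hx hy (habs.trans_le hz.2)
    (habs.symm ▸ mul_le_of_le_one_right hz.1 hg.2)
end
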